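/- Let X be a finite type, C ⊆ X³ a subset, and {·} : X⁶ → ℝ a function satisfying the orthogonality identity: for all a, b, c, d, j, k in X, Σ_{i ∈ X} {a b i; c d j} · {d a k; b c i} equals 1 if k = j and both (a, b, j) ∈ C and (c, d, j) ∈ C, and equals 0 otherwise. Let E be a finite index set, s ∈ E, and p, q, u, v distinct elements of E \ {s}. Define the flip operator A = A(s; p, q, u, v) and the reverse flip operator B on the free ℝ-vector space V on colourings f : E → X by B(g) = Σ_{k ∈ X} {g(v) g(p) k; g(q) g(u) g(s)} · g[s ↦ k]. Then for every colouring f with (f(p), f(q), f(s)) ∈ C and (f(u), f(v), f(s)) ∈ C, one has B(A(f)) = f. In particular, A is injective on the span of such admissible colourings. -/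

import Mathlib

/-- The flip operator `A(s; p, q, u, v)` on the free `ℝ`-vector space on colourings
`f : E → X`: it sends a basis colouring `f` to
`∑ x, {f(p) f(q) x; f(u) f(v) f(s)} • f[s ↦ x]`. -/
noncomputable def flipOp {X E : Type*} [Fintype X] [DecidableEq E]
    (sixj : X → X → X → X → X → X → ℝ) (s p q u v : E) :
    ((E → X) →₀ ℝ) →ₗ[ℝ] ((E → X) →₀ ℝ) :=
  Finsupp.lift ((E → X) →₀ ℝ) ℝ (E → X) fun f =>
    ∑ x : X, sixj (f p) (f q) x (f u) (f v) (f s) • Finsupp.single (Function.update f s x) 1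

/- Note: the reverse flip operator `B`, with `B(g) = ∑ k, {g(v) g(p) k; g(q) g(u) g(s)} • g[s ↦ k]`,
is exactly `flipOp sixj s v p q u`. -/

theorem flipOp_single_one {X E : Type*} [Fintype X] [DecidableEq E]
    (sixj : X → X → X → X → X → X → ℝ) (s p q u v : E) (f : E → X) :
    flipOp sixj s p q u v (Finsupp.single f 1) =
    ∑ x : X, sixj (f p) (f q) x (f u) (f v) (f s) •
      Finsupp.single (Function.update f s x) (1 : ℝ) := by
  simp [flipOp]

theorem reverse_flip_inverts_flip {X E : Type*} [Fintype X] [Fintype E] [DecidableEq E]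
    (C : Set (X × X × X)) (sixj : X → X → X → X → X → X → ℝ)
    (horth : ∀ a b c d j k : X,
      ((k = j ∧ (a, b, j) ∈ C ∧ (c, d, j) ∈ C) →
        ∑ i : X, sixj a b i c d j * sixj d a k b c i = 1) ∧
      (¬(k = j ∧ (a, b, j) ∈ C ∧ (c, d, j) ∈ C) →
        ∑ i : X, sixj a b i c d j * sixj d a k b c i = 0))
    (s p q u v : E) (hps : p ≠ s) (hqs : q ≠ s) (hus : u ≠ s) (hvs : v ≠ s)
    (hpq : p ≠ q) (hpu : p ≠ u) (hpv : p ≠ v) (hqu : q ≠ u) (hqv : q ≠ v) (huv : u ≠ v) :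
    (∀ f : E → X, (f p, f q, f s) ∈ C → (f u, f v, f s) ∈ C →
      (flipOp sixj s v p q u) ((flipOp sixj s p q u v) (Finsupp.single f 1)) =
        Finsupp.single f 1) ∧
    Set.InjOn (flipOp sixj s p q u v)
      (Submodule.span ℝ ((fun f : E → X => Finsupp.single f (1 : ℝ)) ''
        {f : E → X | (f p, f q, f s) ∈ C ∧ (f u, f v, f s) ∈ C}) :
        Set ((E → X) →₀ ℝ)) := by
  have key : ∀ f : E → X, (f p, f q, f s) ∈ C → (f u, f v, f s) ∈ C →
      (flipOp sixj s v p q u) ((flipOp sixj s p q u v) (Finsupp.single f 1)) =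
        Finsupp.single f 1 := by
    intro f h1 h2
    rw [flipOp_single_one, map_sum]
    simp only [map_smul, flipOp_single_one, Function.update_of_ne hps, Function.update_of_ne hqs,
      Function.update_of_ne hus, Function.update_of_ne hvs, Function.update_self,
      Function.update_idem, Finset.smul_sum, smul_smul]
    rw [Finset.sum_comm]
    simp only [← Finset.sum_smul]
    rw [Finset.sum_eq_single (f s)]
    · rw [(horth (f p) (f q) (f u) (f v) (f s) (f s)).1 ⟨rfl, h1, h2⟩, one_smul,
        Function.update_eq_self]
    · intro k _ hk
      rw [(horth (f p) (f q) (f u) (f v) (f s) k).2 (fun h => hk h.1), zero_smul]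
    · intro h
      exact absurd (Finset.mem_univ _) h
  refine ⟨key, ?_⟩
  have inv : Set.LeftInvOn (flipOp sixj s v p q u) (flipOp sixj s p q u v)
      (Submodule.span ℝ ((fun f : E → X => Finsupp.single f (1 : ℝ)) ''
        {f : E → X | (f p, f q, f s) ∈ C ∧ (f u, f v, f s) ∈ C}) :
        Set ((E → X) →₀ ℝ)) := by
    intro x hx
    induction hx using Submodule.span_induction with
    | mem x hx =>
      obtain ⟨f, ⟨h1, h2⟩, rfl⟩ := hx
      exact key f h1 h2
    | zero => simp
    | add x y _ _ hx hy => rw [map_add, map_add, hx, hy]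
    | smul a x _ hx => rw [map_smul, map_smul, hx]
  exact inv.injOn
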